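/- arXiv:1106.0895 — 3 statements merged into one kernel-verified Lean document; each statement's English description precedes it below -/
import Mathlib

section
/- Fix a pmf p on 𝒳ⁿ, a distortion function d: 𝒳ⁿ×𝒳̂ⁿ→[0,∞), and a feed-forward code with delay 1, block length n and M messages. Let X̂ⁿ be the reproduction of Xⁿ ~ p produced by the code, and let I(X̂ⁿ→Xⁿ) be the directed information computed from p and the conditional distribution of X̂ⁿ given Xⁿ induced by the (deterministic) code. Then log₂ M ≥ I(X̂ⁿ→Xⁿ). In particular, if E[d(Xⁿ,X̂ⁿ)] ≤ D then log₂ M ≥ n·Rₙ(D). -/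
open scoped BigOperators
open Filter

noncomputable section

namespace FFRD

variable {X Y : Type} [Fintype X] [DecidableEq X] [Fintype Y] [DecidableEq Y] {n : ℕ}

/-- `p` is a probability mass function on a finite type. -/
def IsPMF {α : Type} [Fintype α] (p : α → ℝ) : Prop :=
  (∀ a, 0 ≤ p a) ∧ ∑ a, p a = 1

/-- `r` is a conditional pmf on `Fin n → Y` given `Fin n → X`. -/
def IsCondPMF (r : (Fin n → X) → (Fin n → Y) → ℝ) : Prop :=
  (∀ x y, 0 ≤ r x y) ∧ ∀ x, ∑ y, r x y = 1

/-- The causal conditioning pmf `q_r(ŷⁿ‖x^{n-1})` induced by the joint pmf `p(x)·r(y|x)`: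
the product over `i` of the conditional probabilities `P(y_i | y^{i-1}, x^{i-1})`. -/
def causalCond (p : (Fin n → X) → ℝ) (r : (Fin n → X) → (Fin n → Y) → ℝ)
    (x : Fin n → X) (y : Fin n → Y) : ℝ :=
  ∏ i : Fin n,
    ((∑ x' : Fin n → X, ∑ y' : Fin n → Y,
        if (∀ j, j < i → x' j = x j) ∧ (∀ j, j ≤ i → y' j = y j)
        then p x' * r x' y' else 0) /
      (∑ x' : Fin n → X, ∑ y' : Fin n → Y,
        if (∀ j, j < i → x' j = x j) ∧ (∀ j, j < i → y' j = y j)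
        then p x' * r x' y' else 0))

/-- Directed information `I(X̂ⁿ → Xⁿ)` computed from source pmf `p` and conditional pmf `r`. -/
def directedInfo (p : (Fin n → X) → ℝ) (r : (Fin n → X) → (Fin n → Y) → ℝ) : ℝ :=
  ∑ x, ∑ y, p x * r x y * Real.logb 2 (r x y / causalCond p r x y)

/-- The `n`-th order rate distortion function with feed-forward. -/
def Rn (n : ℕ) (p : (Fin n → X) → ℝ) (d : (Fin n → X) → (Fin n → Y) → ℝ) (D : ℝ) : ℝ :=
  (1 / (n : ℝ)) *
    sInf {v | ∃ r : (Fin n → X) → (Fin n → Y) → ℝ, IsCondPMF r ∧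
      (∑ x, ∑ y, p x * r x y * d x y) ≤ D ∧ v = directedInfo p r}

/-- Left shift on sequences. -/
def shift (X : Type) : (ℕ → X) → (ℕ → X) := fun ω k => ω (k + 1)

/-- The law of the first `n` coordinates under `μ`. -/
def lawFin [MeasurableSpace X] (μ : MeasureTheory.Measure (ℕ → X)) (n : ℕ)
    (x : Fin n → X) : ℝ :=
  (μ {ω | ∀ i : Fin n, ω (i : ℕ) = x i}).toReal

/-- Per-letter distortion extended to blocks of length `L`. -/
def dBlock (d0 : X → Y → ℝ) (L : ℕ) (x : Fin L → X) (y : Fin L → Y) : ℝ :=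
  (1 / (L : ℝ)) * ∑ i, d0 (x i) (y i)

end FFRD

/-!
For a joint weight `P` on source and reproduction words, write `W k l` for the mass of the pairs
that agree with `(x, y)` on the first `k` source letters and the first `l` reproduction letters.
The causal conditioning `q(y‖x)` is `∏ W i (i+1) / W i i`; together with the backward factor
`S(x‖y) = ∏ W (i+1) (i+1) / W i (i+1)` it telescopes to the chain rule `q * S = P`.
Gibbs' inequality therefore bounds the directed information by `log₂ ∑ r * S`. Once the
message is fixed, the reproduction is a strictly causal function of the source word, and along such
a function `S` is a product of successive conditional probabilities, so it sums to at most one.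
Summing over the messages gives `∑ r * S ≤ M`.
-/

namespace FFRD

lemma sum_mul_logb_div_le_logb {α : Type*} [Fintype α] {a b : α → ℝ} {β B : ℝ} (hβ : 1 < β)
    (ha : ∀ i, 0 ≤ a i) (hsum : ∑ i, a i = 1) (hb : ∀ i, 0 ≤ b i)
    (hab : ∀ i, a i ≠ 0 → b i ≠ 0) (hB : ∑ i, b i ≤ B) :
    ∑ i, a i * Real.logb β (b i / a i) ≤ Real.logb β B := by
  have hB_pos : 0 < B := by
    obtain ⟨i, -, hi⟩ := Finset.exists_ne_zero_of_sum_ne_zero (hsum.trans_ne one_ne_zero)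
    exact (Finset.sum_pos' (fun j _ => hb j)
      ⟨i, Finset.mem_univ i, (hb i).lt_of_ne' (hab i hi)⟩).trans_le hB
  have hterm : ∀ i, a i * Real.log (b i / a i) ≤ a i * Real.log B + (b i / B - a i) := by
    intro i
    rcases (ha i).eq_or_lt with hi | hi
    · simpa [← hi] using div_nonneg (hb i) hB_pos.le
    have hbi : 0 < b i := (hb i).lt_of_ne' (hab i hi.ne')
    calc a i * Real.log (b i / a i)
        = a i * (Real.log B + Real.log (b i / (a i * B))) := by
          rw [← Real.log_mul hB_pos.ne' (by positivity)]
          congr 2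
          field_simp
      _ ≤ a i * (Real.log B + (b i / (a i * B) - 1)) := by
          gcongr
          exact Real.log_le_sub_one_of_pos (by positivity)
      _ = a i * Real.log B + (b i / B - a i) := by
          field_simp
  have hlog : ∑ i, a i * Real.log (b i / a i) ≤ Real.log B := calc
    _ ≤ ∑ i, (a i * Real.log B + (b i / B - a i)) := Finset.sum_le_sum fun i _ => hterm i
    _ = Real.log B + ((∑ i, b i) / B - 1) := by
      rw [Finset.sum_add_distrib, Finset.sum_sub_distrib, ← Finset.sum_mul, ← Finset.sum_div,
        hsum, one_mul]
    _ ≤ Real.log B := by linarith [div_le_one_of_le₀ hB hB_pos.le]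
  simp only [Real.logb, ← mul_div_assoc, ← Finset.sum_div]
  exact div_le_div_of_nonneg_right hlog (Real.log_pos hβ).le

lemma sum_prod_le_one_of_dependsOn_Iic {X : Type*} [Fintype X] {n : ℕ}
    {κ : Fin n → (Fin n → X) → ℝ} (hκ : ∀ i x, 0 ≤ κ i x)
    (hdep : ∀ i, DependsOn (κ i) (Set.Iic i))
    (hsum : ∀ i x, ∑ a, κ i (Function.update x i a) ≤ 1) :
    ∑ x, ∏ i, κ i x ≤ 1 := by
  induction n with
  | zero => simp
  | succ n ih =>
    rcases isEmpty_or_nonempty X with _ | ⟨⟨x₀⟩⟩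
    · simp
    have htail : ∀ a, ∑ t : Fin n → X, ∏ i : Fin n, κ i.succ (Fin.cons a t) ≤ 1 := by
      refine fun a => ih (fun i t => hκ _ _) (fun i t t' h => hdep _ fun j hj => ?_) fun i t => ?_
      · cases j using Fin.cases with
        | zero => rfl
        | succ j => exact h j (Fin.succ_le_succ_iff.mp hj)
      · simpa only [Fin.cons_update] using hsum i.succ (Fin.cons a t)
    have hhead : ∀ a (t : Fin n → X), κ 0 (Fin.cons a t) = κ 0 (Fin.cons a fun _ => x₀) := by
      refine fun a t => hdep 0 fun j hj => ?_
      obtain rfl : j = 0 := Fin.le_zero_iff.mp hj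
      rfl
    calc ∑ x, ∏ i, κ i x
        = ∑ a, ∑ t : Fin n → X, ∏ i, κ i (Fin.cons a t) := by
          rw [← (Fin.consEquiv fun _ => X).sum_comp, Fintype.sum_prod_type]
          rfl
      _ = ∑ a, κ 0 (Fin.cons a fun _ => x₀) *
            ∑ t : Fin n → X, ∏ i : Fin n, κ i.succ (Fin.cons a t) := by
          simp only [Fin.prod_univ_succ, hhead, Finset.mul_sum]
      _ ≤ ∑ a, κ 0 (Fin.cons a fun _ => x₀) :=
          Finset.sum_le_sum fun a _ => mul_le_of_le_one_right (hκ _ _) (htail a)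
      _ ≤ 1 := by
          simpa only [Fin.update_cons_zero] using hsum 0 (Fin.cons x₀ fun _ => x₀)

lemma forall_lt_succ_eq_update_iff {X : Type*} {n : ℕ} {i : Fin n} {a : X} {x x' : Fin n → X} :
    (∀ j : Fin n, (j : ℕ) < i + 1 → x' j = Function.update x i a j) ↔
      x' i = a ∧ ∀ j : Fin n, (j : ℕ) < i → x' j = x j := by
  simp only [Order.lt_add_one_iff, le_iff_eq_or_lt, or_imp, forall_and, Fin.val_inj, forall_eq,
    Function.update_self]
  refine and_congr_right fun _ => forall₂_congr fun j hj => ?_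
  rw [Function.update_of_ne (Fin.ne_of_lt hj)]

section PrefixMass

variable {X Y : Type*} [Fintype X] [DecidableEq X] [Fintype Y] [DecidableEq Y] {n : ℕ}
  {P : (Fin n → X) → (Fin n → Y) → ℝ}

/-- The mass under `P` of the pairs agreeing with `(x, y)` on the first `k` source letters and the
first `l` reproduction letters, i.e. `P(x^k, y^l)`. The lengths are natural numbers so that
consecutive prefixes are indexed by `k` and `k + 1`; a length beyond `n` counts as `n`. -/
def prefixMass (P : (Fin n → X) → (Fin n → Y) → ℝ) (k l : ℕ) (x : Fin n → X) (y : Fin n → Y) : ℝ :=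
  ∑ x', ∑ y', if (∀ j : Fin n, (j : ℕ) < k → x' j = x j) ∧ (∀ j : Fin n, (j : ℕ) < l → y' j = y j)
    then P x' y' else 0

lemma prefixMass_nonneg (hP : ∀ x y, 0 ≤ P x y) (k l : ℕ) (x : Fin n → X) (y : Fin n → Y) :
    0 ≤ prefixMass P k l x y :=
  Finset.sum_nonneg fun x' _ => Finset.sum_nonneg fun y' _ => ite_nonneg (hP x' y') le_rfl

lemma prefixMass_anti (hP : ∀ x y, 0 ≤ P x y) {k k' l l' : ℕ} (hk : k ≤ k') (hl : l ≤ l')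
    (x : Fin n → X) (y : Fin n → Y) : prefixMass P k' l' x y ≤ prefixMass P k l x y := by
  refine Finset.sum_le_sum fun x' _ => Finset.sum_le_sum fun y' _ => ?_
  split_ifs with hlong hshort
  · exact le_rfl
  · exact absurd ⟨fun j hj => hlong.1 j (hj.trans_le hk), fun j hj => hlong.2 j (hj.trans_le hl)⟩
      hshort
  · exact hP x' y'
  · exact le_rfl

lemma prefixMass_zero_zero (x : Fin n → X) (y : Fin n → Y) :
    prefixMass P 0 0 x y = ∑ x, ∑ y, P x y := by
  simp [prefixMass]

lemma prefixMass_self (x : Fin n → X) (y : Fin n → Y) : prefixMass P n n x y = P x y := by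
  simp [prefixMass, ← funext_iff, ite_and]

lemma prefixMass_congr {k l : ℕ} {x x' : Fin n → X} {y y' : Fin n → Y}
    (hx : ∀ j : Fin n, (j : ℕ) < k → x j = x' j) (hy : ∀ j : Fin n, (j : ℕ) < l → y j = y' j) :
    prefixMass P k l x y = prefixMass P k l x' y' := by
  simp +contextual only [prefixMass, hx, hy]

lemma prefixMass_swap (k l : ℕ) (x : Fin n → X) (y : Fin n → Y) :
    prefixMass (fun y x => P x y) l k y x = prefixMass P k l x y := by
  simp only [prefixMass, and_comm]
  exact Finset.sum_comm

lemma sum_prefixMass_update (i : Fin n) (l : ℕ) (x : Fin n → X) (y : Fin n → Y) :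
    ∑ a, prefixMass P (i + 1) l (Function.update x i a) y = prefixMass P i l x y := by
  simp only [prefixMass, forall_lt_succ_eq_update_iff, and_assoc, ite_and (_ = _)]
  rw [Finset.sum_comm]
  refine Finset.sum_congr rfl fun x' _ => ?_
  rw [Finset.sum_comm]
  simp

/-- A reproduction map whose `i`-th letter is determined by the source letters before time `i`:
what a feed-forward decoder with delay 1 computes once the message is fixed. -/
def IsStrictlyCausal {X Y : Type*} {n : ℕ} (c : (Fin n → X) → (Fin n → Y)) : Prop :=
  ∀ i, DependsOn (fun x => c x i) (Set.Iio i)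

lemma sum_prod_prefixMass_div_le_one (hP : ∀ x y, 0 ≤ P x y) {c : (Fin n → X) → (Fin n → Y)}
    (hc : IsStrictlyCausal c) {l : Fin n → ℕ} (hl : ∀ i, l i ≤ i + 1) :
    ∑ x, ∏ i : Fin n, prefixMass P (i + 1) (l i) x (c x) / prefixMass P i (l i) x (c x) ≤ 1 := by
  have hc_prefix : ∀ (i : Fin n) {x x' : Fin n → X}, (∀ j < i, x j = x' j) →
      ∀ j : Fin n, (j : ℕ) < l i → c x j = c x' j := fun i x x' h j hj =>
    hc j fun k hk => h k (lt_of_lt_of_le hk (Nat.lt_succ_iff.mp (hj.trans_le (hl i))))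
  refine sum_prod_le_one_of_dependsOn_Iic
    (fun i x => div_nonneg (prefixMass_nonneg hP ..) (prefixMass_nonneg hP ..))
    (fun i x x' h => ?_) fun i x => ?_
  · have hcx := hc_prefix i fun j hj => h j hj.le
    exact congr_arg₂ _ (prefixMass_congr (fun j hj => h j (Nat.lt_succ_iff.mp hj)) hcx)
      (prefixMass_congr (fun j hj => h j (Fin.lt_def.mpr hj).le) hcx)
  · have hx : ∀ a, ∀ j < i, Function.update x i a j = x j := fun a j hj =>
      Function.update_of_ne hj.ne a x
    calc _ = ∑ a, prefixMass P (i + 1) (l i) (Function.update x i a) (c x) /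
            prefixMass P i (l i) x (c x) :=
          Finset.sum_congr rfl fun a _ => congr_arg₂ _
            (prefixMass_congr (fun _ _ => rfl) (hc_prefix i (hx a)))
            (prefixMass_congr (hx a) (hc_prefix i (hx a)))
      _ ≤ 1 := by
          rw [← Finset.sum_div, sum_prefixMass_update]
          exact div_self_le_one _

/-- The backward causal conditioning `∏ P(x_i | x^{i-1}, y^i)`: the factor complementing
`causalCond` in the chain rule for the joint pmf. -/
def backwardCausalCond (P : (Fin n → X) → (Fin n → Y) → ℝ) (x : Fin n → X) (y : Fin n → Y) : ℝ :=
  ∏ i : Fin n, prefixMass P (i + 1) (i + 1) x y / prefixMass P i (i + 1) x y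

lemma backwardCausalCond_nonneg (hP : ∀ x y, 0 ≤ P x y) (x : Fin n → X) (y : Fin n → Y) :
    0 ≤ backwardCausalCond P x y :=
  Finset.prod_nonneg fun _ _ => div_nonneg (prefixMass_nonneg hP ..) (prefixMass_nonneg hP ..)

lemma sum_backwardCausalCond_le_one (hP : ∀ x y, 0 ≤ P x y) {c : (Fin n → X) → (Fin n → Y)}
    (hc : IsStrictlyCausal c) : ∑ x, backwardCausalCond P x (c x) ≤ 1 :=
  sum_prod_prefixMass_div_le_one hP hc fun _ => le_rfl

end PrefixMass

section Joint

variable {X Y : Type} [Fintype Y] {n : ℕ} {p : (Fin n → X) → ℝ} {r : (Fin n → X) → (Fin n → Y) → ℝ}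

/-- The joint pmf `p(x) r(y|x)` under which all conditional probabilities are computed. -/
def joint {X Y : Type*} {n : ℕ} (p : (Fin n → X) → ℝ) (r : (Fin n → X) → (Fin n → Y) → ℝ) :
    (Fin n → X) → (Fin n → Y) → ℝ :=
  fun x y => p x * r x y

lemma joint_nonneg [Fintype X] (hp : IsPMF p) (hr : IsCondPMF r) (x : Fin n → X) (y : Fin n → Y) :
    0 ≤ joint p r x y :=
  mul_nonneg (hp.1 x) (hr.1 x y)

lemma sum_joint [Fintype X] (hp : IsPMF p) (hr : IsCondPMF r) : ∑ x, ∑ y, joint p r x y = 1 := by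
  simp only [joint, ← Finset.mul_sum, hr.2, mul_one, hp.2]

lemma sum_joint_mul_logb_div_le_logb [Fintype X] (hp : IsPMF p) (hr : IsCondPMF r)
    {b : (Fin n → X) → (Fin n → Y) → ℝ} {B : ℝ} (hb : ∀ x y, 0 ≤ b x y)
    (hab : ∀ x y, joint p r x y ≠ 0 → b x y ≠ 0) (hB : ∑ x, ∑ y, b x y ≤ B) :
    ∑ x, ∑ y, joint p r x y * Real.logb 2 (b x y / joint p r x y) ≤ Real.logb 2 B := by
  rw [← Fintype.sum_prod_type'] at hB ⊢
  refine sum_mul_logb_div_le_logb one_lt_two (fun z => joint_nonneg hp hr z.1 z.2) ?_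
    (fun z => hb z.1 z.2) (fun z => hab z.1 z.2) hB
  rw [Fintype.sum_prod_type', sum_joint hp hr]

lemma isCondPMF_ite_eq [DecidableEq Y] (φ : (Fin n → X) → (Fin n → Y)) :
    IsCondPMF fun x y => if y = φ x then (1 : ℝ) else 0 :=
  ⟨fun _ _ => ite_nonneg zero_le_one le_rfl, fun x => by simp⟩

end Joint

section DirectedInformation

variable {X Y : Type} [Fintype X] [DecidableEq X] [Fintype Y] [DecidableEq Y] {n : ℕ}
  {p : (Fin n → X) → ℝ} {r : (Fin n → X) → (Fin n → Y) → ℝ}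

lemma causalCond_eq_prod_prefixMass (x : Fin n → X) (y : Fin n → Y) :
    causalCond p r x y =
      ∏ i : Fin n, prefixMass (joint p r) i (i + 1) x y / prefixMass (joint p r) i i x y := by
  simp only [causalCond, prefixMass, joint, Fin.lt_def, Fin.le_def, Nat.lt_succ_iff]

lemma causalCond_nonneg (hp : IsPMF p) (hr : IsCondPMF r) (x : Fin n → X) (y : Fin n → Y) :
    0 ≤ causalCond p r x y := by
  rw [causalCond_eq_prod_prefixMass]
  exact Finset.prod_nonneg fun _ _ =>
    div_nonneg (prefixMass_nonneg (joint_nonneg hp hr) ..)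
      (prefixMass_nonneg (joint_nonneg hp hr) ..)

lemma sum_causalCond_le_one (hp : IsPMF p) (hr : IsCondPMF r) (x : Fin n → X) :
    ∑ y, causalCond p r x y ≤ 1 := by
  simp only [causalCond_eq_prod_prefixMass, ← prefixMass_swap (P := joint p r)]
  exact sum_prod_prefixMass_div_le_one (fun y x => joint_nonneg hp hr x y)
    (c := fun _ => x) (fun _ _ _ _ => rfl) fun i => Nat.le_succ i

lemma causalCond_mul_backwardCausalCond (hp : IsPMF p) (hr : IsCondPMF r)
    (x : Fin n → X) (y : Fin n → Y) :
    causalCond p r x y * backwardCausalCond (joint p r) x y = joint p r x y := by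
  set W : ℕ → ℕ → ℝ := fun k l => prefixMass (joint p r) k l x y
  have hW_zero : ∀ {k k' l l'}, k ≤ k' → l ≤ l' → W k l = 0 → W k' l' = 0 := fun hk hl h =>
    le_antisymm ((prefixMass_anti (joint_nonneg hp hr) hk hl x y).trans_eq h)
      (prefixMass_nonneg (joint_nonneg hp hr) ..)
  have hstep : ∀ k, W (k + 1) (k + 1) =
      W k k * (W k (k + 1) / W k k * (W (k + 1) (k + 1) / W k (k + 1))) := fun k => by
    rw [← mul_assoc, mul_div_cancel_of_imp' (hW_zero le_rfl k.le_succ),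
      mul_div_cancel_of_imp' (hW_zero k.le_succ le_rfl)]
  calc causalCond p r x y * backwardCausalCond (joint p r) x y
      = ∏ k ∈ Finset.range n, W k (k + 1) / W k k * (W (k + 1) (k + 1) / W k (k + 1)) := by
        rw [causalCond_eq_prod_prefixMass, backwardCausalCond, ← Finset.prod_mul_distrib,
          Finset.prod_range]
    _ = W n n := Finset.prod_range_induction _ (fun k => W k k)
        ((prefixMass_zero_zero x y).trans (sum_joint hp hr)) n fun k _ => hstep k
    _ = joint p r x y := prefixMass_self x y

lemma causalCond_ne_zero (hp : IsPMF p) (hr : IsCondPMF r) {x : Fin n → X} {y : Fin n → Y}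
    (h : joint p r x y ≠ 0) : causalCond p r x y ≠ 0 := by
  rw [← causalCond_mul_backwardCausalCond hp hr] at h
  exact left_ne_zero_of_mul h

lemma backwardCausalCond_ne_zero (hp : IsPMF p) (hr : IsCondPMF r) {x : Fin n → X}
    {y : Fin n → Y} (h : joint p r x y ≠ 0) : backwardCausalCond (joint p r) x y ≠ 0 := by
  rw [← causalCond_mul_backwardCausalCond hp hr] at h
  exact right_ne_zero_of_mul h

theorem directedInfo_nonneg (hp : IsPMF p) (hr : IsCondPMF r) : 0 ≤ directedInfo p r := by
  have hsum : ∑ x, ∑ y, p x * causalCond p r x y ≤ 1 := by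
    simp only [← Finset.mul_sum, ← hp.2]
    exact Finset.sum_le_sum fun x _ =>
      mul_le_of_le_one_right (hp.1 x) (sum_causalCond_le_one hp hr x)
  have hterm : ∀ x y, p x * r x y * Real.logb 2 (r x y / causalCond p r x y) =
      -(joint p r x y * Real.logb 2 (p x * causalCond p r x y / joint p r x y)) := by
    intro x y
    rcases eq_or_ne (p x) 0 with hx | hx
    · simp [joint, hx]
    · rw [joint, mul_div_mul_left _ _ hx, ← mul_neg, ← Real.logb_inv, inv_div]
  simp only [directedInfo, hterm, Finset.sum_neg_distrib]
  rw [neg_nonneg, ← Real.logb_one]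
  exact sum_joint_mul_logb_div_le_logb hp hr
    (fun x y => mul_nonneg (hp.1 x) (causalCond_nonneg hp hr x y))
    (fun x y h => mul_ne_zero (left_ne_zero_of_mul h) (causalCond_ne_zero hp hr h)) hsum

theorem directedInfo_le_logb_of_sum_le (hp : IsPMF p) (hr : IsCondPMF r) {B : ℝ}
    (hB : ∑ x, ∑ y, r x y * backwardCausalCond (joint p r) x y ≤ B) :
    directedInfo p r ≤ Real.logb 2 B := by
  have hterm : ∀ x y, p x * r x y * Real.logb 2 (r x y / causalCond p r x y) =
      joint p r x y *
        Real.logb 2 (r x y * backwardCausalCond (joint p r) x y / joint p r x y) := by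
    intro x y
    change joint p r x y * _ = _
    rcases eq_or_ne (joint p r x y) 0 with h | h
    · rw [h, zero_mul, zero_mul]
    · rw [← mul_div_mul_right _ _ (backwardCausalCond_ne_zero hp hr h),
        causalCond_mul_backwardCausalCond hp hr]
  simp only [directedInfo, hterm]
  exact sum_joint_mul_logb_div_le_logb hp hr
    (fun x y => mul_nonneg (hr.1 x y) (backwardCausalCond_nonneg (joint_nonneg hp hr) x y))
    (fun x y h => mul_ne_zero (right_ne_zero_of_mul h) (backwardCausalCond_ne_zero hp hr h)) hB

lemma sum_mul_backwardCausalCond_le_card {ι : Type*} [Fintype ι] (hp : IsPMF p)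
    (hr : IsCondPMF r) {c : ι → (Fin n → X) → (Fin n → Y)} (hc : ∀ m, IsStrictlyCausal (c m))
    (hrc : ∀ x y, r x y ≠ 0 → ∃ m, c m x = y) :
    ∑ x, ∑ y, r x y * backwardCausalCond (joint p r) x y ≤ Fintype.card ι := by
  set S := backwardCausalCond (joint p r)
  have hS : ∀ x y, 0 ≤ S x y := backwardCausalCond_nonneg (joint_nonneg hp hr)
  have hS_le : ∀ x y, r x y ≠ 0 → S x y ≤ ∑ m, S x (c m x) := by
    intro x y hxy
    obtain ⟨m, rfl⟩ := hrc x y hxy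
    exact Finset.single_le_sum (f := fun m => S x (c m x)) (fun m _ => hS x _) (Finset.mem_univ m)
  calc ∑ x, ∑ y, r x y * S x y
      ≤ ∑ x, ∑ y, r x y * ∑ m, S x (c m x) := by
        refine Finset.sum_le_sum fun x _ => Finset.sum_le_sum fun y _ => ?_
        rcases eq_or_ne (r x y) 0 with h | h
        · simp [h]
        · exact mul_le_mul_of_nonneg_left (hS_le x y h) (hr.1 x y)
    _ = ∑ m, ∑ x, S x (c m x) := by
        simp only [← Finset.sum_mul, hr.2, one_mul]
        exact Finset.sum_comm
    _ ≤ ∑ _m : ι, 1 :=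
        Finset.sum_le_sum fun m _ => sum_backwardCausalCond_le_one (joint_nonneg hp hr) (hc m)
    _ = Fintype.card ι := by simp

theorem mul_Rn_le_directedInfo (hn : n ≠ 0) (hp : IsPMF p) (hr : IsCondPMF r)
    {d : (Fin n → X) → (Fin n → Y) → ℝ} {D : ℝ} (hD : ∑ x, ∑ y, p x * r x y * d x y ≤ D) :
    n * Rn n p d D ≤ directedInfo p r := by
  rw [Rn, ← mul_assoc, mul_one_div_cancel (Nat.cast_ne_zero.mpr hn), one_mul]
  refine csInf_le ⟨0, ?_⟩ ⟨r, hr, hD, rfl⟩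
  rintro _ ⟨r', hr', -, rfl⟩
  exact directedInfo_nonneg hp hr'

end DirectedInformation

end FFRD

open FFRD in
/-- The converse for stochastic codes with messages in `ι`: `c m` is the feed-forward decoder for
the message `m`, and the encoder may randomise over the messages in any way. -/
theorem converse_feed_forward_general
    {X Y : Type} [Fintype X] [DecidableEq X] [Fintype Y] [DecidableEq Y] {ι : Type*} [Fintype ι]
    {n : ℕ} (hn : n ≠ 0) {p : (Fin n → X) → ℝ} (hp : IsPMF p)
    {r : (Fin n → X) → (Fin n → Y) → ℝ} (hr : IsCondPMF r)
    {c : ι → (Fin n → X) → (Fin n → Y)} (hc : ∀ m, IsStrictlyCausal (c m))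
    (hrc : ∀ x y, r x y ≠ 0 → ∃ m, c m x = y) (d : (Fin n → X) → (Fin n → Y) → ℝ) :
    directedInfo p r ≤ Real.logb 2 (Fintype.card ι) ∧
      ∀ D : ℝ, ∑ x, ∑ y, p x * r x y * d x y ≤ D →
        n * Rn n p d D ≤ Real.logb 2 (Fintype.card ι) := by
  have hinfo : directedInfo p r ≤ Real.logb 2 (Fintype.card ι) :=
    directedInfo_le_logb_of_sum_le hp hr (sum_mul_backwardCausalCond_le_card hp hr hc hrc)
  exact ⟨hinfo, fun D hD => (mul_Rn_le_directedInfo hn hp hr hD).trans hinfo⟩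

open FFRD in
/-- converse / Lemma 4: for any feed-forward code with delay 1 and `M`
messages, `log₂ M ≥ I(X̂ⁿ→Xⁿ)` for the induced (deterministic) conditional distribution;
in particular if the expected distortion is at most `D` then `log₂ M ≥ n·Rₙ(D)`. -/
theorem converse_feed_forward
    {X Y : Type} [Fintype X] [Nonempty X] [DecidableEq X] [Fintype Y] [DecidableEq Y]
    (n : ℕ) (hn : 1 ≤ n)
    (p : (Fin n → X) → ℝ) (hp : IsPMF p)
    (d : (Fin n → X) → (Fin n → Y) → ℝ) (hd : ∀ x y, 0 ≤ d x y)
    (M : ℕ) (hM : 0 < M)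
    (f : (Fin n → X) → Fin M) (g : Fin n → Fin M → (Fin n → X) → Y)
    (hg : ∀ i m x x', (∀ j, j < i → x j = x' j) → g i m x = g i m x')
    (xhat : (Fin n → X) → (Fin n → Y))
    (hxhat : ∀ x i, xhat x i = g i (f x) x)
    (r : (Fin n → X) → (Fin n → Y) → ℝ)
    (hr : ∀ x y, r x y = if y = xhat x then (1 : ℝ) else 0) :
    Real.logb 2 (M : ℝ) ≥ directedInfo p r ∧
      ∀ D : ℝ, (∑ x, p x * d x (xhat x)) ≤ D →
        Real.logb 2 (M : ℝ) ≥ (n : ℝ) * Rn n p d D := by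
  obtain rfl : r = fun x y => if y = xhat x then 1 else 0 := funext₂ hr
  simpa using converse_feed_forward_general (Nat.one_le_iff_ne_zero.mp hn) hp
    (isCondPMF_ite_eq xhat) (c := fun m x i => g i m x) (fun m i x x' h => hg i m x x' h)
    (fun x y hy => ⟨f x, by simp_all [funext_iff]⟩) d
end
end

section
/- Let p be a pmf on 𝒳^{n+l}, let rₙ be a conditional pmf on 𝒳̂ⁿ given 𝒳ⁿ and r_l a conditional pmf on 𝒳̂^l given 𝒳^l, and define the joint pmf of (X^{n+l}, X̂^{n+l}) by p(x^{n+l})·rₙ(x̂₁ⁿ|x₁ⁿ)·r_l(x̂_{n+1}^{n+l}|x_{n+1}^{n+l}). Then the directed informations satisfy I(X̂^{n+l}→X^{n+l}) ≤ I(X̂₁ⁿ→X₁ⁿ) + I(X̂_{n+1}^{n+l}→X_{n+1}^{n+l}), where the directed information of the first block is computed from the marginal of p on the first n coordinates together with rₙ, and that of the second block from the marginal of p on the last l coordinates together with r_l. -/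
open scoped BigOperators
open Filter

noncomputable section

/-!
Let `H(Yᵐ‖X^{m-1}) = ∑ᵢ H(Yᵢ | X^{i-1}, Y^{i-1})` be the causally conditioned entropy of a joint
law. Directed information is `H(Yᵐ‖X^{m-1}) + 𝔼 log r(Yᵐ|Xᵐ)`. For the product channel the second
term is additive over the two blocks, because each block of the joint law is again a marginal
source followed by its own channel. In the first term the summands of the first block are
unchanged, while those of the second block condition on the whole first block as well, and
conditioning reduces entropy by Gibbs' inequality.
-/

namespace FFRD

section Pushforward

variable {Ω A B : Type*} [Fintype Ω] [DecidableEq A] [DecidableEq B]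

/-- The law of `F` when the sample space `Ω` carries the weights `P`. -/
def pushforward (P : Ω → ℝ) (F : Ω → A) (a : A) : ℝ :=
  ∑ ω, if F ω = a then P ω else 0

lemma pushforward_nonneg {P : Ω → ℝ} (hP : ∀ ω, 0 ≤ P ω) (F : Ω → A) (a : A) :
    0 ≤ pushforward P F a :=
  Finset.sum_nonneg fun ω _ => ite_nonneg (hP ω) le_rfl

lemma pushforward_apply_pos {P : Ω → ℝ} (hP : ∀ ω, 0 ≤ P ω) (F : Ω → A) {ω : Ω} (hω : 0 < P ω) :
    0 < pushforward P F (F ω) :=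
  Finset.sum_pos' (fun ω' _ => ite_nonneg (hP ω') le_rfl) ⟨ω, Finset.mem_univ ω, by simpa using hω⟩

lemma sum_pushforward_mul [Fintype A] (P : Ω → ℝ) (F : Ω → A) (h : A → ℝ) :
    ∑ a, pushforward P F a * h a = ∑ ω, P ω * h (F ω) := by
  simp_rw [pushforward, Finset.sum_mul]
  rw [Finset.sum_comm]
  simp [ite_mul]

lemma sum_pushforward [Fintype A] (P : Ω → ℝ) (F : Ω → A) :
    ∑ a, pushforward P F a = ∑ ω, P ω := by
  simpa using sum_pushforward_mul P F fun _ => 1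

lemma pushforward_pushforward [Fintype A] (P : Ω → ℝ) (F : Ω → A) (G : A → B) :
    pushforward (pushforward P F) G = pushforward P fun ω => G (F ω) := by
  funext b
  simpa [pushforward] using sum_pushforward_mul P F fun a => if G a = b then 1 else 0

lemma sum_pushforward_prodMk [Fintype B] (P : Ω → ℝ) (F : Ω → A) (Z : Ω → B) (a : A) :
    ∑ b, pushforward P (fun ω => (F ω, Z ω)) (a, b) = pushforward P F a := by
  simp only [pushforward, Prod.mk.injEq, ite_and]
  rw [Finset.sum_comm]
  refine Finset.sum_congr rfl fun ω _ => ?_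
  split_ifs <;> simp

end Pushforward

section CondEntropy

variable {Ω A B C : Type*} [Fintype Ω] [DecidableEq A] [DecidableEq B] [DecidableEq C]

/-- The conditional probability `P(Z = c | F = a)`, which is `0` when `F = a` has weight `0`. -/
def condProb (P : Ω → ℝ) (Z : Ω → C) (F : Ω → A) (a : A) (c : C) : ℝ :=
  pushforward P (fun ω => (F ω, Z ω)) (a, c) / pushforward P F a

/-- The conditional entropy `H(Z | F)` in nats. The weights `P` need not have total mass `1`. -/
def condEntropy (P : Ω → ℝ) (Z : Ω → C) (F : Ω → A) : ℝ :=
  -∑ ω, P ω * Real.log (condProb P Z F (F ω) (Z ω))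

lemma condProb_nonneg {P : Ω → ℝ} (hP : ∀ ω, 0 ≤ P ω) (Z : Ω → C) (F : Ω → A) (a : A) (c : C) :
    0 ≤ condProb P Z F a c :=
  div_nonneg (pushforward_nonneg hP _ _) (pushforward_nonneg hP _ _)

lemma condProb_apply_pos {P : Ω → ℝ} (hP : ∀ ω, 0 ≤ P ω) (Z : Ω → C) (F : Ω → A) {ω : Ω}
    (hω : 0 < P ω) : 0 < condProb P Z F (F ω) (Z ω) :=
  div_pos (pushforward_apply_pos hP (fun ω => (F ω, Z ω)) hω) (pushforward_apply_pos hP F hω)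

lemma sum_condProb_le_one [Fintype C] (P : Ω → ℝ) (Z : Ω → C) (F : Ω → A) (a : A) :
    ∑ c, condProb P Z F a c ≤ 1 := by
  simp_rw [condProb]
  rw [← Finset.sum_div, sum_pushforward_prodMk]
  exact div_self_le_one _

lemma condProb_pushforward [Fintype B] (P : Ω → ℝ) (π : Ω → B) (Z : B → C) (F : B → A) :
    condProb (pushforward P π) Z F = condProb P (fun ω => Z (π ω)) fun ω => F (π ω) := by
  funext a c
  simp_rw [condProb, pushforward_pushforward]

lemma condEntropy_pushforward [Fintype B] (P : Ω → ℝ) (π : Ω → B) (Z : B → C) (F : B → A) :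
    condEntropy (pushforward P π) Z F = condEntropy P (fun ω => Z (π ω)) fun ω => F (π ω) := by
  rw [condEntropy, condEntropy, condProb_pushforward, sum_pushforward_mul P π
    fun b => Real.log (condProb P (fun ω => Z (π ω)) (fun ω => F (π ω)) (F b) (Z b))]

lemma sum_mul_div_condProb_le [Finite A] [Fintype C] {P : Ω → ℝ} (hP : ∀ ω, 0 ≤ P ω) (Z : Ω → C)
    (F : Ω → A) {q : A → C → ℝ} (hq : ∀ a c, 0 ≤ q a c) (hq_sum : ∀ a, ∑ c, q a c ≤ 1) :
    ∑ ω, P ω * (q (F ω) (Z ω) / condProb P Z F (F ω) (Z ω)) ≤ ∑ ω, P ω := by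
  have := Fintype.ofFinite A
  have cancel : ∀ a c, pushforward P (fun ω => (F ω, Z ω)) (a, c) * (q a c / condProb P Z F a c) ≤
      pushforward P F a * q a c := by
    intro a c
    have hF := pushforward_nonneg hP F a
    rcases eq_or_ne (pushforward P (fun ω => (F ω, Z ω)) (a, c)) 0 with hFZ | hFZ
    · simpa [hFZ] using mul_nonneg hF (hq a c)
    · rw [condProb, div_div_eq_mul_div, mul_div_cancel₀ _ hFZ, mul_comm]
  calc ∑ ω, P ω * (q (F ω) (Z ω) / condProb P Z F (F ω) (Z ω))
      = ∑ a, ∑ c, pushforward P (fun ω => (F ω, Z ω)) (a, c) * (q a c / condProb P Z F a c) := by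
        rw [← Fintype.sum_prod_type', sum_pushforward_mul P (fun ω => (F ω, Z ω))
          fun ac => q ac.1 ac.2 / condProb P Z F ac.1 ac.2]
    _ ≤ ∑ a, ∑ c, pushforward P F a * q a c :=
        Finset.sum_le_sum fun a _ => Finset.sum_le_sum fun c _ => cancel a c
    _ = ∑ a, pushforward P F a * ∑ c, q a c := by simp_rw [Finset.mul_sum]
    _ ≤ ∑ a, pushforward P F a := Finset.sum_le_sum fun a _ =>
        mul_le_of_le_one_right (pushforward_nonneg hP F a) (hq_sum a)
    _ = ∑ ω, P ω := sum_pushforward P F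

lemma condEntropy_le_neg_sum_mul_log [Finite A] [Fintype C] {P : Ω → ℝ} (hP : ∀ ω, 0 ≤ P ω)
    (Z : Ω → C) (F : Ω → A) {q : A → C → ℝ} (hq : ∀ a c, 0 ≤ q a c)
    (hq_sum : ∀ a, ∑ c, q a c ≤ 1) (hq_pos : ∀ ω, 0 < P ω → 0 < q (F ω) (Z ω)) :
    condEntropy P Z F ≤ -∑ ω, P ω * Real.log (q (F ω) (Z ω)) := by
  have log_ratio_le : ∀ ω, P ω * Real.log (q (F ω) (Z ω)) -
      P ω * Real.log (condProb P Z F (F ω) (Z ω)) ≤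
        P ω * (q (F ω) (Z ω) / condProb P Z F (F ω) (Z ω)) - P ω := by
    intro ω
    rcases (hP ω).eq_or_lt with hω | hω
    · simp [← hω]
    have hc := condProb_apply_pos hP Z F hω
    rw [← mul_sub, ← Real.log_div (hq_pos ω hω).ne' hc.ne', ← mul_sub_one]
    exact mul_le_mul_of_nonneg_left
      (Real.log_le_sub_one_of_pos (div_pos (hq_pos ω hω) hc)) hω.le
  have sum_log_ratio_le := Finset.sum_le_sum fun ω (_ : ω ∈ Finset.univ) => log_ratio_le ω
  simp only [Finset.sum_sub_distrib] at sum_log_ratio_le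
  rw [condEntropy]
  linarith [sum_mul_div_condProb_le hP Z F hq hq_sum]

lemma condEntropy_le_condEntropy_comp [Finite A] [Finite C] {P : Ω → ℝ} (hP : ∀ ω, 0 ≤ P ω)
    (Z : Ω → C) (F : Ω → A) (g : A → B) :
    condEntropy P Z F ≤ condEntropy P Z fun ω => g (F ω) := by
  have := Fintype.ofFinite C
  exact condEntropy_le_neg_sum_mul_log hP Z F (q := fun a => condProb P Z (fun ω => g (F ω)) (g a))
    (fun _ _ => condProb_nonneg hP _ _ _ _) (fun _ => sum_condProb_le_one _ _ _ _)
    fun _ => condProb_apply_pos hP Z fun ω => g (F ω)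

end CondEntropy

section JointLaw

variable {A A' B B' : Type*}

/-- The law of an input with weights `p` together with the output of the channel `r`. -/
def jointLaw (p : A → ℝ) (r : A → B → ℝ) (ω : A × B) : ℝ :=
  p ω.1 * r ω.1 ω.2

lemma jointLaw_nonneg {p : A → ℝ} {r : A → B → ℝ} (hp : ∀ a, 0 ≤ p a) (hr : ∀ a b, 0 ≤ r a b)
    (ω : A × B) : 0 ≤ jointLaw p r ω :=
  mul_nonneg (hp _) (hr _ _)

lemma pushforward_jointLaw [Fintype A] [Fintype B] [DecidableEq A'] [DecidableEq B'] (p : A → ℝ)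
    {r : A → B → ℝ} {f : A → A'} {g : B → B'} {r' : A' → B' → ℝ}
    (hr : ∀ a, pushforward (r a) g = r' (f a)) :
    pushforward (jointLaw p r) (Prod.map f g) = jointLaw (pushforward p f) r' := by
  funext ⟨a', b'⟩
  have output_sum : ∀ a, (∑ b, if g b = b' then r a b else 0) = r' (f a) b' :=
    fun a => congrFun (hr a) b'
  simp only [pushforward, jointLaw, Fintype.sum_prod_type, Prod.map_apply, Prod.mk.injEq, ite_and,
    Finset.sum_mul, ite_mul, zero_mul]
  refine Finset.sum_congr rfl fun a _ => ?_
  split_ifs with ha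
  · rw [← ha, ← output_sum, Finset.mul_sum]
    simp only [mul_ite, mul_zero]
  · exact Finset.sum_const_zero

end JointLaw

section CausalEntropy

variable {X Y : Type*} {m n l : ℕ}

lemma take_eq_take_iff {α : Type*} {k : ℕ} (h : k ≤ m) (v w : Fin m → α) :
    Fin.take k h v = Fin.take k h w ↔ ∀ j : Fin m, (j : ℕ) < k → v j = w j :=
  ⟨fun hvw j hj => congrFun hvw ⟨j, hj⟩, fun hvw => funext fun j => hvw _ j.is_lt⟩

/-- The letters of both sequences strictly before time `i`. -/
def past (i : Fin m) (ω : (Fin m → X) × (Fin m → Y)) : (Fin i → X) × (Fin i → Y) :=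
  (Fin.take i i.is_le' ω.1, Fin.take i i.is_le' ω.2)

/-- The subsequences of a pair of sequences at the times listed by `e`. -/
def block (e : Fin n → Fin m) : (Fin m → X) × (Fin m → Y) → (Fin n → X) × (Fin n → Y) :=
  Prod.map (· ∘ e) (· ∘ e)

lemma past_eq_past_iff (i : Fin m) (ω ω' : (Fin m → X) × (Fin m → Y)) :
    past i ω = past i ω' ↔ (∀ j, j < i → ω.1 j = ω'.1 j) ∧ ∀ j, j < i → ω.2 j = ω'.2 j :=
  Prod.mk_inj.trans (and_congr (take_eq_take_iff _ _ _) (take_eq_take_iff _ _ _))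

variable [Fintype X] [DecidableEq X] [Fintype Y] [DecidableEq Y]

/-- The causally conditioned entropy `H(Yᵐ‖X^{m-1})`, in nats, of the joint law `P`. -/
def causalEntropy (P : (Fin m → X) × (Fin m → Y) → ℝ) : ℝ :=
  ∑ i, condEntropy P (fun ω => ω.2 i) (past i)

lemma causalEntropy_le_add_causalEntropy_block {P : (Fin (n + l) → X) × (Fin (n + l) → Y) → ℝ}
    (hP : ∀ ω, 0 ≤ P ω) :
    causalEntropy P ≤ causalEntropy (pushforward P (block (Fin.castAdd l))) +
      causalEntropy (pushforward P (block (Fin.natAdd n))) := by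
  simp only [causalEntropy, condEntropy_pushforward, Fin.sum_univ_add]
  -- The past of a time in the first block is definitionally the past within that block.
  refine add_le_add le_rfl (Finset.sum_le_sum fun i _ => ?_)
  exact condEntropy_le_condEntropy_comp hP (fun ω => ω.2 (Fin.natAdd n i)) (past (Fin.natAdd n i))
    (Prod.map (· ∘ Fin.natAdd n) (· ∘ Fin.natAdd n))

end CausalEntropy

section DirectedInfo

variable {X Y : Type} [Fintype X] [DecidableEq X] [Fintype Y] [DecidableEq Y] {m : ℕ}

lemma causalCond_eq_prod_condProb (p : (Fin m → X) → ℝ) (r : (Fin m → X) → (Fin m → Y) → ℝ)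
    (ω : (Fin m → X) × (Fin m → Y)) :
    causalCond p r ω.1 ω.2 =
      ∏ i, condProb (jointLaw p r) (fun ω => ω.2 i) (past i) (past i ω) (ω.2 i) := by
  have forall_le_iff : ∀ (i : Fin m) (y' : Fin m → Y), (∀ j, j ≤ i → y' j = ω.2 j) ↔
      (∀ j, j < i → y' j = ω.2 j) ∧ y' i = ω.2 i := fun i y' => by
    simp only [le_iff_lt_or_eq, or_imp, forall_and, forall_eq]
  simp only [causalCond, condProb, pushforward, jointLaw, Fintype.sum_prod_type, Prod.mk.injEq,
    past_eq_past_iff, forall_le_iff, and_assoc]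

lemma directedInfo_eq_causalEntropy_add {p : (Fin m → X) → ℝ} {r : (Fin m → X) → (Fin m → Y) → ℝ}
    (hp : ∀ x, 0 ≤ p x) (hr : ∀ x y, 0 ≤ r x y) :
    directedInfo p r = (causalEntropy (jointLaw p r) +
      ∑ ω, jointLaw p r ω * Real.log (r ω.1 ω.2)) / Real.log 2 := by
  have log_density : ∀ ω, jointLaw p r ω * Real.log (r ω.1 ω.2 / causalCond p r ω.1 ω.2) =
      jointLaw p r ω * Real.log (r ω.1 ω.2) - ∑ i, jointLaw p r ω *
        Real.log (condProb (jointLaw p r) (fun ω => ω.2 i) (past i) (past i ω) (ω.2 i)) := by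
    intro ω
    have hP := jointLaw_nonneg hp hr
    rcases (hP ω).eq_or_lt with hω | hω
    · simp [← hω]
    have hc : ∀ i ∈ Finset.univ,
        condProb (jointLaw p r) (fun ω => ω.2 i) (past i) (past i ω) (ω.2 i) ≠ 0 :=
      fun i _ => (condProb_apply_pos hP (fun ω => ω.2 i) (past i) hω).ne'
    rw [causalCond_eq_prod_condProb, Real.log_div (right_ne_zero_of_mul hω.ne')
      (Finset.prod_ne_zero_iff.2 hc), Real.log_prod hc, mul_sub, Finset.mul_sum]
  calc directedInfo p r
      = (∑ ω, jointLaw p r ω * Real.log (r ω.1 ω.2 / causalCond p r ω.1 ω.2)) / Real.log 2 := by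
        simp only [directedInfo, Real.logb, jointLaw, Fintype.sum_prod_type, Finset.sum_div,
          mul_div_assoc]
    _ = _ := by
        simp only [log_density, Finset.sum_sub_distrib, causalEntropy, condEntropy,
          Finset.sum_neg_distrib]
        rw [Finset.sum_comm, sub_eq_neg_add]

end DirectedInfo

section ConcatChannel

variable {X Y : Type*} {n l : ℕ}

/-- The channel that uses `rn` on the first `n` letters and, independently, `rl` on the last `l`. -/
def concatChannel (rn : (Fin n → X) → (Fin n → Y) → ℝ) (rl : (Fin l → X) → (Fin l → Y) → ℝ)
    (x : Fin (n + l) → X) (y : Fin (n + l) → Y) : ℝ :=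
  rn (x ∘ Fin.castAdd l) (y ∘ Fin.castAdd l) * rl (x ∘ Fin.natAdd n) (y ∘ Fin.natAdd n)

variable [Fintype Y]

lemma sum_mul_comp_castAdd_natAdd (f : (Fin n → Y) → ℝ) (g : (Fin l → Y) → ℝ) :
    ∑ y : Fin (n + l) → Y, f (y ∘ Fin.castAdd l) * g (y ∘ Fin.natAdd n) =
      (∑ u, f u) * ∑ v, g v := by
  rw [Fintype.sum_mul_sum, ← Fintype.sum_prod_type', ← (Fin.appendEquiv n l).sum_comp]
  refine Finset.sum_congr rfl fun uv _ => ?_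
  congr 2 <;> funext i <;> simp [Fin.appendEquiv]

lemma pushforward_concatChannel_castAdd [DecidableEq Y] (rn : (Fin n → X) → (Fin n → Y) → ℝ)
    {rl : (Fin l → X) → (Fin l → Y) → ℝ} (hrl : ∀ x, ∑ y, rl x y = 1) (x : Fin (n + l) → X) :
    pushforward (concatChannel rn rl x) (· ∘ Fin.castAdd l) = rn (x ∘ Fin.castAdd l) := by
  funext u
  simpa [pushforward, concatChannel, hrl] using sum_mul_comp_castAdd_natAdd
    (fun u' => if u' = u then rn (x ∘ Fin.castAdd l) u' else 0) (rl (x ∘ Fin.natAdd n))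

lemma pushforward_concatChannel_natAdd [DecidableEq Y]
    {rn : (Fin n → X) → (Fin n → Y) → ℝ} (hrn : ∀ x, ∑ y, rn x y = 1)
    (rl : (Fin l → X) → (Fin l → Y) → ℝ) (x : Fin (n + l) → X) :
    pushforward (concatChannel rn rl x) (· ∘ Fin.natAdd n) = rl (x ∘ Fin.natAdd n) := by
  funext v
  simpa [pushforward, concatChannel, hrn] using sum_mul_comp_castAdd_natAdd
    (rn (x ∘ Fin.castAdd l)) (fun v' => if v' = v then rl (x ∘ Fin.natAdd n) v' else 0)

variable [Fintype X] [DecidableEq X]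

lemma pushforward_jointLaw_concatChannel_castAdd [DecidableEq Y] (p : (Fin (n + l) → X) → ℝ)
    (rn : (Fin n → X) → (Fin n → Y) → ℝ) {rl : (Fin l → X) → (Fin l → Y) → ℝ}
    (hrl : ∀ x, ∑ y, rl x y = 1) :
    pushforward (jointLaw p (concatChannel rn rl)) (block (Fin.castAdd l)) =
      jointLaw (pushforward p (· ∘ Fin.castAdd l)) rn :=
  pushforward_jointLaw p (pushforward_concatChannel_castAdd rn hrl)

lemma pushforward_jointLaw_concatChannel_natAdd [DecidableEq Y] (p : (Fin (n + l) → X) → ℝ)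
    {rn : (Fin n → X) → (Fin n → Y) → ℝ} (hrn : ∀ x, ∑ y, rn x y = 1)
    (rl : (Fin l → X) → (Fin l → Y) → ℝ) :
    pushforward (jointLaw p (concatChannel rn rl)) (block (Fin.natAdd n)) =
      jointLaw (pushforward p (· ∘ Fin.natAdd n)) rl :=
  pushforward_jointLaw p (pushforward_concatChannel_natAdd hrn rl)

lemma sum_jointLaw_concatChannel_mul_log (p : (Fin (n + l) → X) → ℝ)
    {rn : (Fin n → X) → (Fin n → Y) → ℝ} (hrn : ∀ x, ∑ y, rn x y = 1)
    {rl : (Fin l → X) → (Fin l → Y) → ℝ} (hrl : ∀ x, ∑ y, rl x y = 1) :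
    ∑ ω, jointLaw p (concatChannel rn rl) ω * Real.log (concatChannel rn rl ω.1 ω.2) =
      ∑ ω, jointLaw (pushforward p (· ∘ Fin.castAdd l)) rn ω * Real.log (rn ω.1 ω.2) +
      ∑ ω, jointLaw (pushforward p (· ∘ Fin.natAdd n)) rl ω * Real.log (rl ω.1 ω.2) := by
  classical
  rw [← pushforward_jointLaw_concatChannel_castAdd p rn hrl,
    ← pushforward_jointLaw_concatChannel_natAdd p hrn rl,
    sum_pushforward_mul _ (block (Fin.castAdd l)) fun ω => Real.log (rn ω.1 ω.2),
    sum_pushforward_mul _ (block (Fin.natAdd n)) fun ω => Real.log (rl ω.1 ω.2),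
    ← Finset.sum_add_distrib]
  refine Finset.sum_congr rfl fun ω _ => ?_
  rcases eq_or_ne (concatChannel rn rl ω.1 ω.2) 0 with h | h
  · simp [jointLaw, h]
  · rw [← mul_add, concatChannel, Real.log_mul (left_ne_zero_of_mul h) (right_ne_zero_of_mul h)]
    rfl

end ConcatChannel

end FFRD

open FFRD in
/-- key step of Lemma 1 / Appendix A: if two blocks are encoded
independently, the directed information of the concatenated block is at most the sum of the
directed informations of the two blocks computed from the corresponding marginals. -/
theorem directedInfo_concat_le
    {X Y : Type} [Fintype X] [DecidableEq X] [Fintype Y] [DecidableEq Y]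
    (n l : ℕ)
    (p : (Fin (n + l) → X) → ℝ) (hp : IsPMF p)
    (rn : (Fin n → X) → (Fin n → Y) → ℝ) (hrn : IsCondPMF rn)
    (rl : (Fin l → X) → (Fin l → Y) → ℝ) (hrl : IsCondPMF rl)
    (pn : (Fin n → X) → ℝ)
    (hpn : ∀ u, pn u = ∑ x : Fin (n + l) → X,
      if (fun i : Fin n => x (Fin.castAdd l i)) = u then p x else 0)
    (pl : (Fin l → X) → ℝ)
    (hpl : ∀ u, pl u = ∑ x : Fin (n + l) → X,
      if (fun i : Fin l => x (Fin.natAdd n i)) = u then p x else 0)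
    (rc : (Fin (n + l) → X) → (Fin (n + l) → Y) → ℝ)
    (hrc : ∀ x y, rc x y =
      rn (fun i => x (Fin.castAdd l i)) (fun i => y (Fin.castAdd l i)) *
      rl (fun i => x (Fin.natAdd n i)) (fun i => y (Fin.natAdd n i))) :
    directedInfo p rc ≤ directedInfo pn rn + directedInfo pl rl := by
  obtain rfl : pn = pushforward p (· ∘ Fin.castAdd l) := funext hpn
  obtain rfl : pl = pushforward p (· ∘ Fin.natAdd n) := funext hpl
  obtain rfl : rc = concatChannel rn rl := funext₂ hrc
  have hrc_nonneg : ∀ x y, 0 ≤ concatChannel rn rl x y :=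
    fun _ _ => mul_nonneg (hrn.1 _ _) (hrl.1 _ _)
  have entropy_le := causalEntropy_le_add_causalEntropy_block (jointLaw_nonneg hp.1 hrc_nonneg)
  rw [pushforward_jointLaw_concatChannel_castAdd p rn hrl.2,
    pushforward_jointLaw_concatChannel_natAdd p hrn.2 rl] at entropy_le
  rw [directedInfo_eq_causalEntropy_add hp.1 hrc_nonneg,
    directedInfo_eq_causalEntropy_add (pushforward_nonneg hp.1 _) hrn.1,
    directedInfo_eq_causalEntropy_add (pushforward_nonneg hp.1 _) hrl.1, ← add_div,
    sum_jointLaw_concatChannel_mul_log p hrn.2 hrl.2]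
  refine div_le_div_of_nonneg_right ?_ (Real.log_nonneg one_le_two)
  linarith
end
end

section
/- Fix a pmf p on 𝒳ⁿ with p(xⁿ) > 0 for all xⁿ, λ ≥ 0, a distortion function d: 𝒳ⁿ×𝒳̂ⁿ→[0,∞), and a strictly positive causal conditioning pmf q. Define r*(x̂ⁿ|xⁿ) = q(x̂ⁿ||x^{n−1})·2^{−λ d(xⁿ,x̂ⁿ)} / Σ_{x̂ⁿ} q(x̂ⁿ||x^{n−1})·2^{−λ d(xⁿ,x̂ⁿ)}. Then r* minimizes K(r,q) = I_FF(r,q) + λ·Σ_{xⁿ,x̂ⁿ} p(xⁿ)r(x̂ⁿ|xⁿ)d(xⁿ,x̂ⁿ) over all conditional pmfs r on 𝒳̂ⁿ given 𝒳ⁿ: K(r,q) ≥ K(r*,q) for every conditional pmf r. -/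
open scoped BigOperators
open Filter

noncomputable section

namespace FFRD

/-- `q` is a causal conditioning pmf `q(x̂ⁿ‖x^{n−1}) = ∏ᵢ qᵢ(x̂ᵢ | x̂^{i−1}, x^{i−1})`,
where each factor is a pmf on `Y` depending only on the strict pasts of `x` and `y`. -/
def IsCausalCondKernel {X Y : Type} [Fintype X] [Fintype Y] {n : ℕ}
    (q : (Fin n → X) → (Fin n → Y) → ℝ) : Prop :=
  ∃ qi : Fin n → (Fin n → X) → (Fin n → Y) → Y → ℝ,
    (∀ i x y, (∀ b, 0 ≤ qi i x y b) ∧ ∑ b, qi i x y b = 1) ∧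
    (∀ i x x' y y', (∀ j, j < i → x j = x' j) → (∀ j, j < i → y j = y' j) →
      qi i x y = qi i x' y') ∧
    (∀ x y, q x y = ∏ i, qi i x y (y i))

/-- `I_FF(r, q) = Σ_{xⁿ,x̂ⁿ} p(xⁿ) r(x̂ⁿ|xⁿ) log₂ ( r(x̂ⁿ|xⁿ) / q(x̂ⁿ‖x^{n−1}) )`. -/
def IFF {X Y : Type} [Fintype X] [Fintype Y] {n : ℕ} (p : (Fin n → X) → ℝ)
    (r q : (Fin n → X) → (Fin n → Y) → ℝ) : ℝ :=
  ∑ x, ∑ y, p x * r x y * Real.logb 2 (r x y / q x y)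

end FFRD

/-!
For each fixed source word the objective is a free energy `F(r) = D(r‖q) + ∑ r c` with cost
`c = λ d`. Taking the logarithm of the tilted pmf `r* = q b⁻ᶜ / Z` gives the exact identity
`F(r) = D(r‖r*) - (∑ r) log_b Z`. Among pmfs only the relative entropy `D(r‖r*)` varies; it is
nonnegative by Gibbs' inequality and vanishes at `r = r*`. Averaging over source words with
nonnegative weights preserves the inequality.
-/

namespace FFRD

section FreeEnergy

variable {β : Type*} [Fintype β] {b : ℝ} {q r s c : β → ℝ}

/-- The relative entropy `D(r‖s)` of two weights on a finite type, with logarithms to base `b`.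
A term with `r y = 0` contributes `0`, as usual; a term with `s y = 0` also contributes `0` here,
so the definition is meaningful only when `r` vanishes wherever `s` does. -/
def relEntropy (b : ℝ) (r s : β → ℝ) : ℝ :=
  ∑ y, r y * Real.logb b (r y / s y)

/-- The partition function `Z = ∑ q b⁻ᶜ`, which normalizes the exponential tilt of `q` by the
cost `c`. -/
def partitionFunction (b : ℝ) (q c : β → ℝ) : ℝ :=
  ∑ y, q y * b ^ (-c y)

/-- The exponential tilt `q b⁻ᶜ / Z` of the weight `q` by the cost `c`. -/
def exponentialTilt (b : ℝ) (q c : β → ℝ) (y : β) : ℝ :=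
  q y * b ^ (-c y) / partitionFunction b q c

/-- The free energy `D(r‖q) + ∑ r c` of the weight `r`, relative to the reference weight `q` and
the cost `c`: the part of the objective that belongs to a single source word. -/
def freeEnergy (b : ℝ) (q c r : β → ℝ) : ℝ :=
  relEntropy b r q + ∑ y, r y * c y

theorem sub_div_log_le_mul_logb_div (hb : 1 < b) {u v : ℝ} (hu : 0 ≤ u) (hv : 0 < v) :
    (u - v) / Real.log b ≤ u * Real.logb b (u / v) := by
  have klFun_eq : v * InformationTheory.klFun (u / v) = u * Real.log (u / v) + v - u := by
    rw [InformationTheory.klFun_apply]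
    field_simp
  have klFun_nonneg : 0 ≤ v * InformationTheory.klFun (u / v) :=
    mul_nonneg hv.le (InformationTheory.klFun_nonneg (div_nonneg hu hv.le))
  rw [Real.logb, mul_div_assoc']
  exact div_le_div_of_nonneg_right (by linarith) (Real.log_pos hb).le

theorem relEntropy_nonneg (hb : 1 < b) (hr : ∀ y, 0 ≤ r y) (hs : ∀ y, 0 < s y)
    (hsr : ∑ y, s y ≤ ∑ y, r y) : 0 ≤ relEntropy b r s :=
  calc
    0 ≤ (∑ y, r y - ∑ y, s y) / Real.log b :=
      div_nonneg (sub_nonneg.2 hsr) (Real.log_pos hb).le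
    _ = ∑ y, (r y - s y) / Real.log b := by rw [← Finset.sum_sub_distrib, Finset.sum_div]
    _ ≤ relEntropy b r s :=
      Finset.sum_le_sum fun y _ => sub_div_log_le_mul_logb_div hb (hr y) (hs y)

theorem relEntropy_self (b : ℝ) (r : β → ℝ) : relEntropy b r r = 0 :=
  Finset.sum_eq_zero fun y _ => by
    rcases eq_or_ne (r y) 0 with hy | hy <;> simp [hy]

theorem partitionFunction_pos [Nonempty β] (hb : 0 < b) (hq : ∀ y, 0 < q y) :
    0 < partitionFunction b q c :=
  Finset.sum_pos (fun y _ => mul_pos (hq y) (Real.rpow_pos_of_pos hb _)) Finset.univ_nonempty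

theorem exponentialTilt_pos (hb : 0 < b) (hq : ∀ y, 0 < q y) (y : β) :
    0 < exponentialTilt b q c y :=
  have : Nonempty β := ⟨y⟩
  div_pos (mul_pos (hq y) (Real.rpow_pos_of_pos hb _)) (partitionFunction_pos hb hq)

theorem sum_exponentialTilt [Nonempty β] (hb : 0 < b) (hq : ∀ y, 0 < q y) :
    ∑ y, exponentialTilt b q c y = 1 := by
  simp only [exponentialTilt, ← Finset.sum_div]
  exact div_self (partitionFunction_pos hb hq).ne'

theorem logb_exponentialTilt (hb : 0 < b) (hb₁ : b ≠ 1) (hq : ∀ y, 0 < q y) (y : β) :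
    Real.logb b (exponentialTilt b q c y) =
      Real.logb b (q y) - c y - Real.logb b (partitionFunction b q c) := by
  have : Nonempty β := ⟨y⟩
  have rpow_ne_zero : b ^ (-c y) ≠ 0 := (Real.rpow_pos_of_pos hb _).ne'
  rw [exponentialTilt,
    Real.logb_div (mul_ne_zero (hq y).ne' rpow_ne_zero) (partitionFunction_pos hb hq).ne',
    Real.logb_mul (hq y).ne' rpow_ne_zero, Real.logb_rpow hb hb₁, ← sub_eq_add_neg]

theorem freeEnergy_eq_relEntropy_exponentialTilt_sub (hb : 0 < b) (hb₁ : b ≠ 1)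
    (hq : ∀ y, 0 < q y) (r : β → ℝ) :
    freeEnergy b q c r = relEntropy b r (exponentialTilt b q c) -
      (∑ y, r y) * Real.logb b (partitionFunction b q c) := by
  simp only [freeEnergy, relEntropy, Finset.sum_mul, ← Finset.sum_add_distrib,
    ← Finset.sum_sub_distrib]
  refine Finset.sum_congr rfl fun y _ => ?_
  rcases eq_or_ne (r y) 0 with hy | hy
  · simp [hy]
  · rw [Real.logb_div hy (hq y).ne', Real.logb_div hy (exponentialTilt_pos hb hq y).ne',
      logb_exponentialTilt hb hb₁ hq]
    ring

theorem freeEnergy_exponentialTilt_le (hb : 1 < b) (hq : ∀ y, 0 < q y) (hr : ∀ y, 0 ≤ r y)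
    (hr_sum : ∑ y, r y = 1) :
    freeEnergy b q c (exponentialTilt b q c) ≤ freeEnergy b q c r := by
  have hb₀ : 0 < b := one_pos.trans hb
  have : Nonempty β := by
    by_contra! h
    simp at hr_sum
  have tilt_sum : ∑ y, exponentialTilt b q c y = 1 := sum_exponentialTilt hb₀ hq
  have gibbs : 0 ≤ relEntropy b r (exponentialTilt b q c) :=
    relEntropy_nonneg hb hr (exponentialTilt_pos hb₀ hq) (tilt_sum.trans hr_sum.symm).le
  rw [freeEnergy_eq_relEntropy_exponentialTilt_sub hb₀ hb.ne' hq,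
    freeEnergy_eq_relEntropy_exponentialTilt_sub hb₀ hb.ne' hq, relEntropy_self, tilt_sum, hr_sum]
  exact sub_le_sub_right gibbs _

end FreeEnergy

theorem sum_mul_freeEnergy {α β : Type*} [Fintype α] [Fintype β] (b lam : ℝ) (p : α → ℝ)
    (q d r : α → β → ℝ) :
    ∑ x, p x * freeEnergy b (q x) (fun y => lam * d x y) (r x) =
      ∑ x, ∑ y, p x * r x y * Real.logb b (r x y / q x y) +
        lam * ∑ x, ∑ y, p x * r x y * d x y := by
  simp only [freeEnergy, relEntropy, mul_add, Finset.mul_sum, Finset.sum_add_distrib, mul_assoc,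
    mul_left_comm lam]

end FFRD

open FFRD in
theorem exponential_tilt_minimizes_K_general {α β : Type*} [Fintype α] [Fintype β] {b : ℝ}
    (hb : 1 < b) {p : α → ℝ} (hp : ∀ x, 0 ≤ p x) (lam : ℝ) (d : α → β → ℝ) {q : α → β → ℝ}
    (hq : ∀ x y, 0 < q x y) {rstar : α → β → ℝ}
    (hrstar : ∀ x y, rstar x y =
      q x y * b ^ (-(lam * d x y)) / ∑ y', q x y' * b ^ (-(lam * d x y')))
    {r : α → β → ℝ} (hr : ∀ x y, 0 ≤ r x y) (hr_sum : ∀ x, ∑ y, r x y = 1) :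
    ∑ x, ∑ y, p x * rstar x y * Real.logb b (rstar x y / q x y) +
        lam * ∑ x, ∑ y, p x * rstar x y * d x y ≤
      ∑ x, ∑ y, p x * r x y * Real.logb b (r x y / q x y) +
        lam * ∑ x, ∑ y, p x * r x y * d x y := by
  have rstar_eq (x : α) : rstar x = exponentialTilt b (q x) fun y => lam * d x y :=
    funext (hrstar x)
  rw [← sum_mul_freeEnergy, ← sum_mul_freeEnergy]
  refine Finset.sum_le_sum fun x _ => mul_le_mul_of_nonneg_left ?_ (hp x)
  rw [rstar_eq]
  exact freeEnergy_exponentialTilt_le hb (hq x) (hr x) (hr_sum x)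

open FFRD in
/-- Lemma 10: for fixed strictly positive causal conditioning `q`, the
conditional pmf `r*(x̂ⁿ|xⁿ) ∝ q(x̂ⁿ‖x^{n−1})·2^{−λd(xⁿ,x̂ⁿ)}` minimizes
`K(r,q) = I_FF(r,q) + λ·E_r[d]` over conditional pmfs `r`. -/
theorem exponential_tilt_minimizes_K
    {X Y : Type} [Fintype X] [DecidableEq X] [Fintype Y] [DecidableEq Y]
    (n : ℕ)
    (p : (Fin n → X) → ℝ) (hp : IsPMF p) (hppos : ∀ x, 0 < p x)
    (lam : ℝ) (hlam : 0 ≤ lam)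
    (d : (Fin n → X) → (Fin n → Y) → ℝ) (hd : ∀ x y, 0 ≤ d x y)
    (q : (Fin n → X) → (Fin n → Y) → ℝ) (hq : IsCausalCondKernel q)
    (hqpos : ∀ x y, 0 < q x y)
    (rstar : (Fin n → X) → (Fin n → Y) → ℝ)
    (hrstar : ∀ x y, rstar x y =
      q x y * 2 ^ (-(lam * d x y)) / ∑ y', q x y' * 2 ^ (-(lam * d x y'))) :
    ∀ r : (Fin n → X) → (Fin n → Y) → ℝ, IsCondPMF r →
      IFF p rstar q + lam * (∑ x, ∑ y, p x * rstar x y * d x y) ≤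
      IFF p r q + lam * (∑ x, ∑ y, p x * r x y * d x y) :=
  fun _ hr => exponential_tilt_minimizes_K_general one_lt_two hp.1 lam d hqpos hrstar hr.1 hr.2
end
end
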